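/- Assume P does not lie on a median of ABC (a line joining a vertex to the midpoint of the opposite side). Then T_P(K⁻¹(Z)) = Z, where Z is the center of the conic C_P through A, B, C, P, Q. -/

import Mathlib

noncomputable section

/-- The real affine plane. -/
abbrev Pt : Type := ℝ × ℝ

/-- `u` and `v` are parallel vectors (the zero vector is parallel to everything). -/
def Par (u v : Pt) : Prop := ∃ t : ℝ, u = t • v ∨ v = t • u

/-- The centroid of the triangle `ABC`. -/
def cent (A B C : Pt) : Pt := (3⁻¹ : ℝ) • (A + B + C)

/-- The homothety with center `Z` and ratio `r`. -/
def homoth (Z : Pt) (r : ℝ) (X : Pt) : Pt := Z + r • (X - Z)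

/-- The value at `p` of the quadratic polynomial with coefficient vector `c`. -/
def qval (c : Fin 6 → ℝ) (p : Pt) : ℝ :=
  c 0 * p.1 ^ 2 + c 1 * p.1 * p.2 + c 2 * p.2 ^ 2 + c 3 * p.1 + c 4 * p.2 + c 5

/-- `S` is a conic: the zero locus of a real polynomial of total degree 2. -/
def IsConic (S : Set Pt) : Prop :=
  ∃ c : Fin 6 → ℝ, ¬(c 0 = 0 ∧ c 1 = 0 ∧ c 2 = 0) ∧ S = {p | qval c p = 0}

/-- `Z` is a center of symmetry of `S`. -/
def IsCenterOf (Z : Pt) (S : Set Pt) : Prop :=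
  ∀ p ∈ S, (2 : ℝ) • Z - p ∈ S

/-- The gradient at `p` of the quadratic polynomial with coefficients `c`. -/
def qgrad (c : Fin 6 → ℝ) (p : Pt) : Pt :=
  (2 * c 0 * p.1 + c 1 * p.2 + c 3, c 1 * p.1 + 2 * c 2 * p.2 + c 4)

/-- The line through `X` and `Y`. -/
def lineThru (X Y : Pt) : Set Pt := {p | ∃ t : ℝ, p = X + t • (Y - X)}

/-- `L` is the tangent line at the nonsingular point `p` of the conic with coefficients `c`. -/
def IsTangentLineAt (c : Fin 6 → ℝ) (L : Set Pt) (p : Pt) : Prop :=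
  qval c p = 0 ∧ qgrad c p ≠ 0 ∧
  L = {q | (qgrad c p).1 * (q.1 - p.1) + (qgrad c p).2 * (q.2 - p.2) = 0}

/-- Twice the signed area of the triangle `ABC`. -/
def twiceArea (A B C : Pt) : ℝ :=
  (B.1 - A.1) * (C.2 - A.2) - (B.2 - A.2) * (C.1 - A.1)

theorem twiceArea_ne_zero {A B C : Pt} (h : AffineIndependent ℝ ![A, B, C]) :
    twiceArea A B C ≠ 0 := by
  intro h0
  unfold twiceArea at h0
  rw [affineIndependent_iff] at h
  have key : ∀ r s : ℝ, r * (B.1 - A.1) + s * (C.1 - A.1) = 0 →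
      r * (B.2 - A.2) + s * (C.2 - A.2) = 0 → r = 0 ∧ s = 0 := by
    intro r s h1 h2
    have hw := h Finset.univ ![-r - s, r, s] (by simp [Fin.sum_univ_three]; ring) (by
      simp only [Fin.sum_univ_three, Matrix.cons_val]
      ext
      · simp only [Prod.fst_add, Prod.smul_fst, smul_eq_mul, Prod.fst_zero]; linarith
      · simp only [Prod.snd_add, Prod.smul_snd, smul_eq_mul, Prod.snd_zero]; linarith)
    exact ⟨by simpa using hw 1 (Finset.mem_univ _), by simpa using hw 2 (Finset.mem_univ _)⟩
  obtain ⟨-, hB1⟩ := key (-(C.1 - A.1)) (B.1 - A.1) (by ring) (by linarith)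
  obtain ⟨-, hB2⟩ := key (-(C.2 - A.2)) (B.2 - A.2) (by linarith) (by ring)
  exact one_ne_zero (key 1 0 (by linarith) (by linarith)).1

theorem Collinear.twiceArea_eq_zero {X Y W : Pt} (h : Collinear ℝ {X, Y, W}) :
    twiceArea X Y W = 0 := by
  obtain ⟨v, hv⟩ := (collinear_iff_of_mem (p₀ := X) (by simp)).1 h
  obtain ⟨r, hr⟩ := hv Y (by simp)
  obtain ⟨s, hs⟩ := hv W (by simp)
  subst hr hs
  simp [twiceArea]
  ring

theorem exists_barycentric {A B C : Pt} (h : twiceArea A B C ≠ 0) (Z : Pt) :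
    ∃ u v w : ℝ, u + v + w = 1 ∧ Z = u • A + v • B + w • C := by
  refine ⟨twiceArea Z B C / twiceArea A B C, twiceArea A Z C / twiceArea A B C,
    twiceArea A B Z / twiceArea A B C, ?_, ?_⟩
  · field_simp
    simp only [twiceArea]
    ring
  · ext <;>
    · simp only [Prod.fst_add, Prod.smul_fst, Prod.snd_add, Prod.smul_snd, smul_eq_mul]
      field_simp
      simp only [twiceArea]
      ring

/-- The trace on `BC` of the point with barycentric coordinates `(x, y, z)`. -/
theorem trace_eq {A B C P D : Pt} {x y z : ℝ} (h : twiceArea A B C ≠ 0)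
    (hsum : x + y + z = 1) (hP : P = x • A + y • B + z • C) (hx1 : x ≠ 1)
    (hAD : Collinear ℝ {A, P, D}) (hBC : Collinear ℝ {B, C, D}) :
    D = (y / (y + z)) • B + (z / (y + z)) • C := by
  obtain ⟨d, e, f, hdef, hD⟩ := exists_barycentric h D
  have hyz : y + z ≠ 0 := fun h' => hx1 (by linarith)
  have hAD' := hAD.twiceArea_eq_zero
  have hBC' := hBC.twiceArea_eq_zero
  obtain rfl : x = 1 - y - z := by linarith
  obtain rfl : d = 1 - e - f := by linarith
  have hd : (1 - e - f) * twiceArea A B C = 0 := by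
    rw [← hBC', hD]
    simp [twiceArea]
    ring
  have hef : (y * f - z * e) * twiceArea A B C = 0 := by
    rw [← hAD', hD, hP]
    simp [twiceArea]
    ring
  have hd' := (mul_eq_zero.1 hd).resolve_right h
  have hef' := (mul_eq_zero.1 hef).resolve_right h
  have he : e = y / (y + z) := by
    rw [eq_div_iff hyz]
    linear_combination (-y) * hd' - hef'
  have hf : f = z / (y + z) := by
    rw [eq_div_iff hyz]
    linear_combination (-z) * hd' + hef'
  rw [hD, hd', he, hf, zero_smul, zero_add]

/-- The quadratic form underlying `qval c`. -/
def qform (c : Fin 6 → ℝ) (d : Pt) : ℝ :=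
  c 0 * d.1 ^ 2 + c 1 * d.1 * d.2 + c 2 * d.2 ^ 2

theorem qval_barycentric (c : Fin 6 → ℝ) (A B C : Pt) {u v w : ℝ} (h : u + v + w = 1) :
    qval c (u • A + v • B + w • C) = u * qval c A + v * qval c B + w * qval c C
      - (qform c (B - C) * (v * w) + qform c (C - A) * (w * u) + qform c (A - B) * (u * v)) := by
  obtain rfl : u = 1 - v - w := by linarith
  simp [qval, qform]
  ring

/-- A quadratic form on the plane vanishing on the three sides of a triangle is zero. -/
theorem qform_eq_zero {c : Fin 6 → ℝ} {A B C : Pt} (h : twiceArea A B C ≠ 0)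
    (h₁ : qform c (B - C) = 0) (h₂ : qform c (C - A) = 0) (h₃ : qform c (A - B) = 0) :
    c 0 = 0 ∧ c 1 = 0 ∧ c 2 = 0 := by
  simp only [qform, Prod.fst_sub, Prod.snd_sub] at h₁ h₂ h₃
  refine ⟨?_, ?_, ?_⟩ <;> apply (mul_eq_zero.1 ?_).resolve_right (pow_ne_zero 2 h) <;>
    simp only [twiceArea]
  · linear_combination ((C.2 - A.2) * (B.2 - A.2)) * h₁
      + ((B.2 - A.2) ^ 2 - (C.2 - A.2) * (B.2 - A.2)) * h₂
      + ((C.2 - A.2) ^ 2 - (C.2 - A.2) * (B.2 - A.2)) * h₃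
  · linear_combination
      (-((C.2 - A.2) * (B.1 - A.1) + (B.2 - A.2) * (C.1 - A.1))) * h₁
      + ((C.2 - A.2) * (B.1 - A.1) + (B.2 - A.2) * (C.1 - A.1)
        - 2 * (B.2 - A.2) * (B.1 - A.1)) * h₂
      + ((C.2 - A.2) * (B.1 - A.1) + (B.2 - A.2) * (C.1 - A.1)
        - 2 * (C.2 - A.2) * (C.1 - A.1)) * h₃
  · linear_combination ((C.1 - A.1) * (B.1 - A.1)) * h₁
      + ((B.1 - A.1) ^ 2 - (C.1 - A.1) * (B.1 - A.1)) * h₂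
      + ((C.1 - A.1) ^ 2 - (C.1 - A.1) * (B.1 - A.1)) * h₃

/-- The circumconic through `(x : y : z)` and `(x(y+z) : y(z+x) : z(x+y))` is unique, with
coefficients `(x(z²-y²) : y(x²-z²) : z(y²-x²))`. -/
theorem circumconic_coeffs {x y z α β γ : ℝ} (hy0 : y ≠ 0) (hz0 : z ≠ 0)
    (ha : x * (z ^ 2 - y ^ 2) ≠ 0) (hne : ¬(α = 0 ∧ β = 0 ∧ γ = 0))
    (hP : α * (y * z) + β * (z * x) + γ * (x * y) = 0)
    (hQ : α * (y * (z + x) * (z * (x + y))) + β * (z * (x + y) * (x * (y + z)))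
      + γ * (x * (y + z) * (y * (z + x))) = 0) :
    ∃ k : ℝ, k ≠ 0 ∧ α = k * (x * (z ^ 2 - y ^ 2)) ∧ β = k * (y * (x ^ 2 - z ^ 2)) ∧
      γ = k * (z * (y ^ 2 - x ^ 2)) := by
  have hβ : β * (x * (z ^ 2 - y ^ 2)) = α * (y * (x ^ 2 - z ^ 2)) := by
    apply mul_left_cancel₀ hz0
    linear_combination (y + z) * (z + x) * hP - hQ
  have hγ : γ * (x * (z ^ 2 - y ^ 2)) = α * (z * (y ^ 2 - x ^ 2)) := by
    apply mul_left_cancel₀ hy0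
    linear_combination hQ - (x + y) * (y + z) * hP
  have hα : α ≠ 0 := by
    rintro rfl
    rw [zero_mul] at hβ hγ
    exact hne ⟨rfl, (mul_eq_zero.1 hβ).resolve_right ha, (mul_eq_zero.1 hγ).resolve_right ha⟩
  refine ⟨α / (x * (z ^ 2 - y ^ 2)), div_ne_zero hα ha, (div_mul_cancel₀ _ ha).symm, ?_, ?_⟩
  · rw [div_mul_eq_mul_div, eq_div_iff ha, hβ]
  · rw [div_mul_eq_mul_div, eq_div_iff ha, hγ]

/-- First barycentric coordinate of the fixed point equation for the center `(u, v, w)` of the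
circumconic with coefficients `(x(z²-y²) : y(x²-z²) : z(y²-x²))`. -/
theorem center_fixed_coord {x y z u v w l : ℝ} (hsum : u + v + w = 1)
    (hzx : z + x ≠ 0) (hxy : x + y ≠ 0)
    (ha : x * (z ^ 2 - y ^ 2) ≠ 0) (hb : y * (x ^ 2 - z ^ 2) ≠ 0) (hc : z * (y ^ 2 - x ^ 2) ≠ 0)
    (h₁ : y * (x ^ 2 - z ^ 2) * w + z * (y ^ 2 - x ^ 2) * v = l)
    (h₂ : z * (y ^ 2 - x ^ 2) * u + x * (z ^ 2 - y ^ 2) * w = l)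
    (h₃ : x * (z ^ 2 - y ^ 2) * v + y * (x ^ 2 - z ^ 2) * u = l) :
    (1 - 2 * v) * (x / (z + x)) + (1 - 2 * w) * (x / (x + y)) = u := by
  have key : ∀ {a b c u v w : ℝ}, b * w + c * v = l → c * u + a * w = l → a * v + b * u = l →
      2 * (a * b * c) * u = l * (a * (b + c - a)) := by
    intro a b c u v w h₁ h₂ h₃
    linear_combination (-a ^ 2) * h₁ + a * b * h₂ + a * c * h₃
  have hu := key h₁ h₂ h₃
  have hv := key h₂ h₃ h₁
  have hw := key h₃ h₁ h₂
  rw [← hsum]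
  field_simp
  apply mul_left_cancel₀ (mul_ne_zero two_ne_zero (mul_ne_zero (mul_ne_zero ha hb) hc))
  linear_combination (x * (x + y) + x * (z + x) - (z + x) * (x + y)) * hu
    + (x * (z + x) - x * (x + y)) * hv + (x * (x + y) - x * (z + x)) * hw

theorem Z_fixed_by_TP_Kinv
    (A B C P P' Q Q' D E F D₃ E₃ F₃ : Pt) (x y z : ℝ)
    (hABC : AffineIndependent ℝ ![A, B, C])
    (hsum : x + y + z = 1)
    (hPco : P = x • A + y • B + z • C)
    (hx0 : x ≠ 0) (hy0 : y ≠ 0) (hz0 : z ≠ 0)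
    (hx1 : x ≠ 1) (hy1 : y ≠ 1) (hz1 : z ≠ 1)
    (hst : x * y + y * z + z * x ≠ 0)
    (hP' : P' = (y * z / (x * y + y * z + z * x)) • A
        + (x * z / (x * y + y * z + z * x)) • B
        + (x * y / (x * y + y * z + z * x)) • C)
    (hQ : Q = homoth (cent A B C) (-(1 / 2)) P')
    (hQ' : Q' = homoth (cent A B C) (-(1 / 2)) P)
    (hD : Collinear ℝ {A, P, D} ∧ Collinear ℝ {B, C, D})
    (hE : Collinear ℝ {B, P, E} ∧ Collinear ℝ {A, C, E})
    (hF : Collinear ℝ {C, P, F} ∧ Collinear ℝ {A, B, F})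
    (hD₃ : Collinear ℝ {A, P', D₃} ∧ Collinear ℝ {B, C, D₃})
    (hE₃ : Collinear ℝ {B, P', E₃} ∧ Collinear ℝ {A, C, E₃})
    (hF₃ : Collinear ℝ {C, P', F₃} ∧ Collinear ℝ {A, B, F₃})
    (hxy : x ≠ y) (hyz : y ≠ z) (hxz : x ≠ z)
    (TP : Pt ≃ᵃ[ℝ] Pt) (hTP : TP A = D ∧ TP B = E ∧ TP C = F)
    (CP : Set Pt) (Z : Pt)
    (hCPc : IsConic CP) (hACP : A ∈ CP) (hBCP : B ∈ CP) (hCCP : C ∈ CP)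
    (hPCP : P ∈ CP) (hQCP : Q ∈ CP)
    (hCPuniq : ∀ S : Set Pt, IsConic S → A ∈ S → B ∈ S → C ∈ S → P ∈ S → Q ∈ S → S = CP)
    (hZ : IsCenterOf Z CP) (hZuniq : ∀ W : Pt, IsCenterOf W CP → W = Z) :
    TP (homoth (cent A B C) (-2) Z) = Z := by
  have hδ := twiceArea_ne_zero hABC
  have hyz0 : y + z ≠ 0 := fun h => hx1 (by linarith)
  have hzx0 : z + x ≠ 0 := fun h => hy1 (by linarith)
  have hxy0 : x + y ≠ 0 := fun h => hz1 (by linarith)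
  have hsq : ∀ {s t : ℝ}, s ≠ t → t + s ≠ 0 → t ^ 2 - s ^ 2 ≠ 0 := fun hst hts => by
    rw [sq_sub_sq]
    exact mul_ne_zero hts (sub_ne_zero.2 hst.symm)
  have ha := mul_ne_zero hx0 (hsq hyz (by rwa [add_comm]))
  have hb := mul_ne_zero hy0 (hsq hxz.symm (by rwa [add_comm]))
  have hc := mul_ne_zero hz0 (hsq hxy (by rwa [add_comm]))
  have hδB : twiceArea B A C ≠ 0 := fun h => hδ (by simp only [twiceArea] at h ⊢; linarith)
  have hδC : twiceArea C A B ≠ 0 := fun h => hδ (by simp only [twiceArea] at h ⊢; linarith)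
  have hD' := trace_eq hδ hsum hPco hx1 hD.1 hD.2
  have hE' := trace_eq (x := y) (y := x) (z := z) hδB (by linarith)
    (by rw [hPco]; abel) hy1 hE.1 hE.2
  have hF' := trace_eq (x := z) (y := x) (z := y) hδC (by linarith)
    (by rw [hPco]; abel) hz1 hF.1 hF.2
  obtain ⟨c, hc2, rfl⟩ := hCPc
  simp only [Set.mem_ofPred_eq] at hACP hBCP hCCP hPCP hQCP
  have hbary : ∀ {u v w : ℝ}, u + v + w = 1 → qval c (u • A + v • B + w • C) = 0 →
      qform c (B - C) * (v * w) + qform c (C - A) * (w * u) + qform c (A - B) * (u * v) = 0 := by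
    intro u v w huvw h
    rw [qval_barycentric c A B C huvw, hACP, hBCP, hCCP] at h
    linarith
  obtain ⟨σ, hσ⟩ : ∃ σ, σ = x * y + y * z + z * x := ⟨_, rfl⟩
  rw [← hσ] at hst hP'
  have hQA : 2⁻¹ * (1 - y * z / σ) = (2 * σ)⁻¹ * (x * (y + z)) := by
    field_simp
    linear_combination hσ
  have hQB : 2⁻¹ * (1 - x * z / σ) = (2 * σ)⁻¹ * (y * (z + x)) := by
    field_simp
    linear_combination hσ
  have hQC : 2⁻¹ * (1 - x * y / σ) = (2 * σ)⁻¹ * (z * (x + y)) := by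
    field_simp
    linear_combination hσ
  have hQco : Q = ((2 * σ)⁻¹ * (x * (y + z))) • A + ((2 * σ)⁻¹ * (y * (z + x))) • B
      + ((2 * σ)⁻¹ * (z * (x + y))) • C := by
    rw [hQ, hP', ← hQA, ← hQB, ← hQC, homoth, cent]
    module
  rw [hPco] at hPCP
  rw [hQco] at hQCP
  have hQeq := hbary (by field_simp; linear_combination (-2) * hσ) hQCP
  obtain ⟨k, hk, hα, hβ, hγ⟩ := circumconic_coeffs hy0 hz0 ha
    (fun h => hc2 (qform_eq_zero hδ h.1 h.2.1 h.2.2)) (hbary hsum hPCP)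
    (by
      apply mul_left_cancel₀ (pow_ne_zero 2 (inv_ne_zero (mul_ne_zero two_ne_zero hst)))
      linear_combination hQeq)
  obtain ⟨u, v, w, huvw, hZco⟩ := exists_barycentric hδ Z
  rw [hα, hβ, hγ] at hbary
  have hrefl : ∀ {r s t : ℝ}, r + s + t = 1 → qval c (r • A + s • B + t • C) = 0 →
      x * (z ^ 2 - y ^ 2) * ((2 * v - s) * (2 * w - t))
        + y * (x ^ 2 - z ^ 2) * ((2 * w - t) * (2 * u - r))
        + z * (y ^ 2 - x ^ 2) * ((2 * u - r) * (2 * v - s)) = 0 := by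
    intro r s t hrst h
    have hmem := hZ _ h
    rw [Set.mem_ofPred_eq, show (2 : ℝ) • Z - (r • A + s • B + t • C)
      = (2 * u - r) • A + (2 * v - s) • B + (2 * w - t) • C by rw [hZco]; module] at hmem
    apply mul_left_cancel₀ hk
    linear_combination hbary (by linarith) hmem
  have hA := hrefl (r := 1) (s := 0) (t := 0) (by norm_num) (by simpa using hACP)
  have hB := hrefl (r := 0) (s := 1) (t := 0) (by norm_num) (by simpa using hBCP)
  have hC := hrefl (r := 0) (s := 0) (t := 1) (by norm_num) (by simpa using hCCP)
  obtain ⟨l, hl⟩ : ∃ l, l = 2 * (x * (z ^ 2 - y ^ 2) * (v * w) + y * (x ^ 2 - z ^ 2) * (w * u)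
    + z * (y ^ 2 - x ^ 2) * (u * v)) := ⟨_, rfl⟩
  have h₁ : y * (x ^ 2 - z ^ 2) * w + z * (y ^ 2 - x ^ 2) * v = l := by
    rw [hl]; linear_combination (-1 / 2) * hA
  have h₂ : z * (y ^ 2 - x ^ 2) * u + x * (z ^ 2 - y ^ 2) * w = l := by
    rw [hl]; linear_combination (-1 / 2) * hB
  have h₃ : x * (z ^ 2 - y ^ 2) * v + y * (x ^ 2 - z ^ 2) * u = l := by
    rw [hl]; linear_combination (-1 / 2) * hC
  have hu := center_fixed_coord huvw hzx0 hxy0 ha hb hc h₁ h₂ h₃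
  have hv := center_fixed_coord (by linarith) hxy0 hyz0 hb hc ha h₂ h₃ h₁
  have hw := center_fixed_coord (by linarith) hyz0 hzx0 hc ha hb h₃ h₁ h₂
  have hK : homoth (cent A B C) (-2) Z
      = (1 - 2 * v) • (B - A) + (1 - 2 * w) • (C - A) + A := by
    obtain rfl : u = 1 - v - w := by linarith
    rw [hZco, homoth, cent]
    module
  have hT : TP (homoth (cent A B C) (-2) Z)
      = (1 - 2 * u) • D + (1 - 2 * v) • E + (1 - 2 * w) • F := by
    have hlin := TP.map_vadd A ((1 - 2 * v) • (B - A) + (1 - 2 * w) • (C - A))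
    have hBA := TP.toAffineMap.linearMap_vsub B A
    have hCA := TP.toAffineMap.linearMap_vsub C A
    simp only [vadd_eq_add, vsub_eq_sub, AffineEquiv.linear_toAffineMap, LinearEquiv.coe_coe,
      AffineEquiv.coe_toAffineMap, map_add, map_smul] at hlin hBA hCA
    rw [hK, hlin, hBA, hCA, hTP.1, hTP.2.1, hTP.2.2]
    obtain rfl : u = 1 - v - w := by linarith
    module
  rw [hT, hD', hE', hF', hZco]
  ext
  · simp only [Prod.fst_add, Prod.smul_fst, smul_eq_mul]
    linear_combination A.1 * hu + B.1 * hv + C.1 * hw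
  · simp only [Prod.snd_add, Prod.smul_snd, smul_eq_mul]
    linear_combination A.2 * hu + B.2 * hv + C.2 * hw
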